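/- Let Φ: ℂ^{n×n} → ℂ^{n×n} be given by Φ(Z) = Σ_{i=1}^m K_i Z K_i† for matrices K_1, …, K_m ∈ ℂ^{n×n} satisfying Σ_i K_i K_i† = I and Σ_i K_i† K_i = I, with adjoint Φ†(Z) = Σ_{i=1}^m K_i† Z K_i. If X, Y ∈ ℂ^{n×n} are Hermitian matrices satisfying Φ(X) = Y and Φ†(Y) = X, then X and Y are cospectral, i.e., they have the same characteristic polynomial. -/

import Mathlib

open Matrix BigOperators

/-- The completely positive map with Kraus operators `K i`. -/
noncomputable def krausMap {n : Type*} [Fintype n] {m : ℕ} (K : Fin m → Matrix n n ℂ)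
    (Z : Matrix n n ℂ) : Matrix n n ℂ :=
  ∑ i, K i * Z * (K i)ᴴ

/-- The adjoint (with respect to the trace inner product) of the Kraus map. -/
noncomputable def krausMapAdj {n : Type*} [Fintype n] {m : ℕ} (K : Fin m → Matrix n n ℂ)
    (Z : Matrix n n ℂ) : Matrix n n ℂ :=
  ∑ i, (K i)ᴴ * Z * K i

theorem aux_intertwine {n : Type*} [Fintype n] [DecidableEq n] {m : ℕ}
    (K : Fin m → Matrix n n ℂ)
    (hunital : ∑ i, K i * (K i)ᴴ = 1)
    (htp : ∑ i, (K i)ᴴ * K i = 1)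
    (X Y : Matrix n n ℂ) (hX : X.IsHermitian) (hY : Y.IsHermitian)
    (hXY : krausMap K X = Y) (hYX : krausMapAdj K Y = X) (i : Fin m) :
    K i * X = Y * K i := by
  have h1 : ∑ j, (K j * X * X * (K j)ᴴ).trace = (X * X).trace := by
    calc _ = ∑ j, (X * X * ((K j)ᴴ * K j)).trace := by
          refine Finset.sum_congr rfl fun j _ => ?_
          rw [Matrix.mul_assoc, Matrix.mul_assoc, Matrix.trace_mul_comm]
          simp only [Matrix.mul_assoc]
      _ = _ := by rw [← Matrix.trace_sum, ← Matrix.mul_sum, htp, Matrix.mul_one]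
  have h2 : ∑ j, (Y * (K j * (K j)ᴴ) * Y).trace = (Y * Y).trace := by
    rw [← Matrix.trace_sum, ← Matrix.sum_mul, ← Matrix.mul_sum, hunital, Matrix.mul_one]
  have h3 : ∑ j, (K j * X * (K j)ᴴ * Y).trace = (Y * Y).trace := by
    rw [← Matrix.trace_sum, ← Matrix.sum_mul]
    exact congrArg (fun Z => (Z * Y).trace) hXY
  have h3' : ∑ j, (Y * (K j * X * (K j)ᴴ)).trace = (Y * Y).trace := by
    rw [← h3]
    exact Finset.sum_congr rfl fun j _ => Matrix.trace_mul_comm _ _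
  have h4 : ∑ j, (K j * X * (K j)ᴴ * Y).trace = (X * X).trace := by
    calc _ = ∑ j, (X * ((K j)ᴴ * Y * K j)).trace := by
          refine Finset.sum_congr rfl fun j _ => ?_
          rw [Matrix.mul_assoc, Matrix.mul_assoc, Matrix.trace_mul_comm]
          simp only [Matrix.mul_assoc]
      _ = _ := by
          rw [← Matrix.trace_sum, ← Matrix.mul_sum]
          exact congrArg (fun Z => (X * Z).trace) hYX
  have h5 : ∑ j, ((K j * X - Y * K j) * (K j * X - Y * K j)ᴴ).trace = 0 := by
    have : ∀ j, ((K j * X - Y * K j) * (K j * X - Y * K j)ᴴ).trace =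
        (K j * X * X * (K j)ᴴ).trace - (K j * X * (K j)ᴴ * Y).trace
          - (Y * (K j * X * (K j)ᴴ)).trace + (Y * (K j * (K j)ᴴ) * Y).trace := by
      intro j
      rw [← Matrix.trace_sub, ← Matrix.trace_sub, ← Matrix.trace_add, conjTranspose_sub,
        conjTranspose_mul, conjTranspose_mul, hX.eq, hY.eq]
      congr 1
      noncomm_ring
    simp only [this, Finset.sum_add_distrib, Finset.sum_sub_distrib]
    rw [h1, h2, h3', h4]
    rw [h3] at h4
    rw [h4]; ring
  open scoped ComplexOrder in
  have h6 := (Finset.sum_eq_zero_iff_of_nonneg (fun j _ =>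
    (Matrix.posSemidef_self_mul_conjTranspose (K j * X - Y * K j)).trace_nonneg)).1 h5 i
      (Finset.mem_univ i)
  open scoped ComplexOrder in
  exact sub_eq_zero.1 (Matrix.trace_mul_conjTranspose_self_eq_zero_iff.1 h6)

theorem aux_trace {n : Type*} [Fintype n] [DecidableEq n]
    (X : Matrix n n ℂ) (hX : X.IsHermitian) (p : Polynomial ℂ) :
    (Polynomial.aeval X p).trace = ∑ i, p.eval (hX.eigenvalues i : ℂ) := by
  have hd : ∀ d : n → ℂ, Polynomial.aeval (diagonal d) p = diagonal (fun i => p.eval (d i)) := by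
    intro d
    have := Polynomial.aeval_algHom_apply (Matrix.diagonalAlgHom ℂ (n := n) (α := ℂ)) d p
    simp only [Matrix.diagonalAlgHom_apply] at this
    rw [this]
    congr 1
    ext i
    have h := Polynomial.aeval_algHom_apply (Pi.evalAlgHom ℂ (fun _ : n => ℂ) i) d p
    simpa [Polynomial.aeval_def, Polynomial.eval₂_eq_eval_map] using h.symm
  conv_lhs => rw [hX.spectral_theorem]
  rw [Polynomial.aeval_algHom_apply, hd, Unitary.conjStarAlgAut_apply, Matrix.trace_mul_cycle]
  simp [Matrix.trace]

theorem aux_multiset (s t : Multiset ℂ)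
    (h : ∀ p : Polynomial ℂ, (s.map p.eval).sum = (t.map p.eval).sum) : s = t := by
  classical
  ext a
  let p := Lagrange.interpolate (insert a (s.toFinset ∪ t.toFinset)) id
    (fun x : ℂ => if x = a then (1 : ℂ) else 0)
  have hp : ∀ x ∈ (insert a (s.toFinset ∪ t.toFinset)), p.eval x = if x = a then (1 : ℂ) else 0 :=
    fun x hx => Lagrange.eval_interpolate_at_node _ (Function.injective_id.injOn) hx
  have hc : ∀ u : Multiset ℂ, (u.map fun x => if x = a then (1 : ℂ) else 0).sum = u.count a := by
    intro u
    induction u using Multiset.induction_on with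
    | empty => simp
    | cons b u ih =>
      simp only [Multiset.map_cons, Multiset.sum_cons, ih, Multiset.count_cons, eq_comm (a := a)]
      split_ifs <;> push_cast <;> ring
  have := h p
  rw [Multiset.map_congr rfl (fun x hx => hp x (by simp [hx])),
    Multiset.map_congr (s := t) rfl (fun x hx => hp x (by simp [hx])), hc, hc] at this
  exact_mod_cast this

/-- For a unital trace-preserving completely positive map `Φ` with `Φ(X) = Y` and
`Φ†(Y) = X` for Hermitian `X`, `Y`, the matrices `X` and `Y` are cospectral. -/
theorem cospectral_of_krausMap_fixed {n : Type*} [Fintype n] [DecidableEq n] {m : ℕ}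
    (K : Fin m → Matrix n n ℂ)
    (hunital : ∑ i, K i * (K i)ᴴ = 1)
    (htp : ∑ i, (K i)ᴴ * K i = 1)
    (X Y : Matrix n n ℂ) (hX : X.IsHermitian) (hY : Y.IsHermitian)
    (hXY : krausMap K X = Y) (hYX : krausMapAdj K Y = X) :
    X.charpoly = Y.charpoly := by
  have hK := aux_intertwine K hunital htp X Y hX hY hXY hYX
  have hp : ∀ (p : Polynomial ℂ) i, K i * Polynomial.aeval X p = Polynomial.aeval Y p * K i := by
    intro p i
    induction p using Polynomial.induction_on' with
    | add p q hp hq => simp [Matrix.mul_add, Matrix.add_mul, hp, hq]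
    | monomial k a =>
      have : K i * X ^ k = Y ^ k * K i := (show SemiconjBy (K i) X Y from hK i).pow_right k
      simp [Polynomial.aeval_monomial, Algebra.algebraMap_eq_smul_one, this]
  have ht : ∀ p : Polynomial ℂ, (Polynomial.aeval X p).trace = (Polynomial.aeval Y p).trace := by
    intro p
    calc _ = (Polynomial.aeval X p * ∑ i, (K i)ᴴ * K i).trace := by rw [htp, Matrix.mul_one]
      _ = (Polynomial.aeval Y p * ∑ i, K i * (K i)ᴴ).trace := by
        rw [Matrix.mul_sum, Matrix.mul_sum, Matrix.trace_sum, Matrix.trace_sum]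
        refine Finset.sum_congr rfl fun i _ => ?_
        rw [← Matrix.mul_assoc, ← Matrix.mul_assoc, ← hp, Matrix.trace_mul_cycle]
      _ = _ := by rw [hunital, Matrix.mul_one]
  have hr : X.charpoly.roots = Y.charpoly.roots := by
    refine aux_multiset _ _ fun p => ?_
    have := ht p
    rw [aux_trace X hX, aux_trace Y hY] at this
    rw [hX.roots_charpoly_eq_eigenvalues, hY.roots_charpoly_eq_eigenvalues]
    rw [Multiset.map_map, Multiset.map_map]
    exact this
  rw [(IsAlgClosed.splits X.charpoly).eq_prod_roots_of_monic X.charpoly_monic,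
    (IsAlgClosed.splits Y.charpoly).eq_prod_roots_of_monic Y.charpoly_monic, hr]
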